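/- arXiv:1707.03639 — 3 statements merged into one kernel-verified Lean document; each statement's English description precedes it below -/
import Mathlib

section
/- For every finite group G, d(G) + |G| ≤ E(G) ≤ 2|G| − 1, where d(G) is the maximal length of a product-one free sequence over G and E(G) is the smallest l such that every sequence over G of length at least l has a product-one subsequence of length exactly |G|. -/
/-- A sequence (multiset) over `G` is product-one if its terms can be ordered so
that their product equals `1`. -/
def IsProductOne {G : Type*} [Group G] (S : Multiset G) : Prop :=
  ∃ l : List G, (l : Multiset G) = S ∧ l.prod = 1

/-- A sequence is product-one free if it has no nonempty product-one subsequence. -/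
def ProductOneFree {G : Type*} [Group G] (S : Multiset G) : Prop :=
  ∀ T ≤ S, T ≠ 0 → ¬ IsProductOne T

/-!
For the lower bound, append `|G| - 1` copies of `1` to a longest product-one free sequence: the
terms other than `1` of a product-one subsequence again form a product-one sequence, hence there are
none, and at most `|G| - 1` terms remain.

The upper bound is Olson's argument. Start from the word `g, …, g` of length `|G|`, where `g` is a
most frequent term of `S`. Its product is `1`, but it may use `g` more often than `S` does. In that
case at least `|G|` terms of `S` are not used by the word, and since none of them occurs more often
than `g` does in the word, they can be distributed over the positions holding `g` as alternatives,
without repetition at any position. If no choice of alternatives preserved the product, the product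
would be uniquely represented in a product of sets, and iterating the Kemperman–Scherk theorem would
give more than `|G|` distinct products. So some choice preserves the product, and it uses `g` less
often.
-/

section KempermanScherk

open Finset
open scoped Pointwise

variable {G : Type*} [Group G] [DecidableEq G] {A B : Finset G} {a b e : G}

theorem card_add_card_le_of_forall_eq_one (ha : a ∈ A) (hb : b ∈ B)
    (h : ∀ e, a * e ∈ A → e * b ∈ B → e = 1) : #A + #B ≤ #(A * B) + 1 := by
  have hunion : A * {b} ∪ {a} * B ⊆ A * B :=
    union_subset (mul_subset_mul_left (singleton_subset_iff.2 hb))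
      (mul_subset_mul_right (singleton_subset_iff.2 ha))
  have hinter : A * {b} ∩ ({a} * B) ⊆ {a * b} := fun x hx ↦ by
    simp only [mem_inter, mem_mul, mem_singleton, exists_eq_left] at hx
    obtain ⟨⟨a', ha', rfl⟩, b', hb', hab⟩ := hx
    have hquot : a⁻¹ * a' = 1 :=
      h _ (by simpa) (by rwa [mul_assoc, ← hab, inv_mul_cancel_left])
    rw [mem_singleton, inv_mul_eq_one.1 hquot]
  have hinter_card : #(A * {b} ∩ ({a} * B)) ≤ 1 := card_le_one_iff_subset_singleton.2 ⟨_, hinter⟩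
  calc #A + #B = #(A * {b}) + #({a} * B) := by rw [card_mul_singleton, card_singleton_mul]
    _ = #(A * {b} ∪ {a} * B) + #(A * {b} ∩ ({a} * B)) :=
      (card_union_add_card_inter (A * {b}) ({a} * B)).symm
    _ ≤ #(A * B) + 1 := by gcongr

theorem uniqueMul_mulETransformLeft (h : UniqueMul A B a b) (heB : e * b ∈ B) (he : e ≠ 1) :
    UniqueMul (mulETransformLeft e (A, B)).1 (mulETransformLeft e (A, B)).2
      (a * e) (e⁻¹ * b) := by
  rintro x y hx hy hxy
  rw [mul_assoc, mul_inv_cancel_left] at hxy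
  simp only [mulETransformLeft_fst, mulETransformLeft_snd, mem_inter, mem_union,
    ← inv_smul_mem_iff, ← MulOpposite.op_inv, op_smul_eq_mul, smul_eq_mul, inv_inv]
    at hx hy
  obtain ⟨hxA, hxeA⟩ := hx
  obtain hyB | heyB := hy
  · obtain ⟨rfl, rfl⟩ := h hxA hyB hxy
    have hxe := (h hxeA heB (by simp)).1
    exact absurd (by simpa using hxe) he
  · obtain ⟨hx, hy⟩ := h hxeA heyB (by simpa)
    exact ⟨by simp [← hx], by simp [← hy]⟩

theorem uniqueMul_mulETransformRight (h : UniqueMul A B a b) (heA : a * e ∈ A) (he : e ≠ 1) :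
    UniqueMul (mulETransformRight e (A, B)).1 (mulETransformRight e (A, B)).2 a b := by
  rintro x y hx hy hxy
  simp only [mulETransformRight_fst, mulETransformRight_snd, mem_inter, mem_union,
    ← inv_smul_mem_iff, ← MulOpposite.op_inv, op_smul_eq_mul, smul_eq_mul, inv_inv]
    at hx hy
  obtain ⟨hyB, heyB⟩ := hy
  obtain hxA | hxeA := hx
  · exact h hxA hyB hxy
  · obtain ⟨-, rfl⟩ := h hxeA heyB (by simpa)
    have hae := (h heA hyB (mul_assoc a e y)).1
    exact absurd (by simpa using hae) he

theorem card_mulETransformRight_snd_lt (h : UniqueMul A B a b) (hb : b ∈ B) (heA : a * e ∈ A)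
    (he : e ≠ 1) : #(mulETransformRight e (A, B)).2 < #B := by
  refine card_lt_card (inter_subset_left.ssubset_of_ne fun hB ↦ ?_)
  have hsub : B = e⁻¹ • B :=
    eq_of_subset_of_card_le (inter_eq_left.1 hB) (card_smul_finset _ _).le
  have hebB : e⁻¹ * b ∈ B := hsub ▸ smul_mem_smul_finset hb
  have hae := (h heA hebB (by simp)).1
  exact he (by simpa using hae)

-- The total sizes of the two e-transforms average `#A + #B`, so either the left one increases
-- it or the right one does not decrease it.
theorem exists_larger_uniqueMul (ha : a ∈ A) (hb : b ∈ B) (h : UniqueMul A B a b)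
    (heA : a * e ∈ A) (heB : e * b ∈ B) (he : e ≠ 1) :
    ∃ A' B' : Finset G, ∃ a' ∈ A', ∃ b' ∈ B', UniqueMul A' B' a' b' ∧ A' * B' ⊆ A * B ∧
      (#A + #B < #A' + #B' ∨ #A + #B ≤ #A' + #B' ∧ #B' < #B) := by
  obtain hlt | hle := lt_or_le_of_add_le_add (MulETransform.card e (A, B)).ge
  · exact ⟨_, _, _, mem_inter.2 ⟨heA, smul_mem_smul_finset ha⟩,
      _, mem_union_right _ (smul_mem_smul_finset hb), uniqueMul_mulETransformLeft h heB he,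
      mulETransformLeft.fst_mul_snd_subset e (A, B), .inl hlt⟩
  · exact ⟨_, _, a, mem_union_left _ ha,
      b, mem_inter.2 ⟨hb, inv_smul_mem_iff.1 (by simpa)⟩, uniqueMul_mulETransformRight h heA he,
      mulETransformRight.fst_mul_snd_subset e (A, B),
      .inr ⟨hle, card_mulETransformRight_snd_lt h hb heA he⟩⟩

-- The Kemperman–Scherk theorem, at a uniquely represented product that need not be `1`.
theorem card_add_card_le_card_mul_add_one_of_uniqueMul {A B : Finset G} {a b : G}
    (ha : a ∈ A) (hb : b ∈ B) (h : UniqueMul A B a b) : #A + #B ≤ #(A * B) + 1 := by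
  by_cases! hAB : ∀ e, a * e ∈ A → e * b ∈ B → e = 1
  · exact card_add_card_le_of_forall_eq_one ha hb hAB
  obtain ⟨e, heA, heB, he⟩ := hAB
  obtain ⟨A', B', a', ha', b', hb', h', hsub, hlarger⟩ := exists_larger_uniqueMul ha hb h heA heB he
  have : #A ≤ #(A * B) := card_le_card_mul_right ⟨b, hb⟩
  have : #B ≤ #(A * B) := card_le_card_mul_left ⟨a, ha⟩
  have hmul : #(A' * B') ≤ #(A * B) := card_le_card hsub
  have hind := card_add_card_le_card_mul_add_one_of_uniqueMul ha' hb' h'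
  omega
termination_by (2 * #(A * B) + 1 - (#A + #B), #B)
decreasing_by
  rw [Prod.lex_iff]
  dsimp only
  omega

theorem sum_card_lt_card_prod_ofFn_add {n : ℕ} (A : Fin n → Finset G) (c : Fin n → G)
    (hc : ∀ i, c i ∈ A i)
    (hunique : ∀ y : Fin n → G, (∀ i, y i ∈ A i) →
      (List.ofFn y).prod = (List.ofFn c).prod → y = c) :
    ∑ i, #(A i) < #(List.ofFn A).prod + n := by
  induction n with
  | zero => simp
  | succ n ih =>
    have htail := ih (Fin.tail A) (Fin.tail c) (fun i ↦ hc i.succ) fun y hy hprod ↦ by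
      have hcons := hunique (Fin.cons (c 0) y) (Fin.cases (hc 0) hy) (by
        simpa [List.ofFn_succ, Fin.tail_def] using hprod)
      rw [← hcons, Fin.tail_cons]
    have hhead : UniqueMul (A 0) (List.ofFn (Fin.tail A)).prod (c 0)
        (List.ofFn (Fin.tail c)).prod := by
      rintro x z hx hz hxz
      obtain ⟨y, rfl⟩ := mem_prod_list_ofFn.1 hz
      have hcons := hunique (Fin.cons x fun i ↦ y i) (Fin.cases hx fun i ↦ (y i).2) (by
        simpa [List.ofFn_succ, Fin.tail_def] using hxz)
      exact ⟨by simp [← hcons], by simp [← hcons, Fin.tail_def]⟩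
    have hmul := card_add_card_le_card_mul_add_one_of_uniqueMul (hc 0)
      (mem_prod_list_ofFn.2 ⟨fun i ↦ ⟨c i.succ, hc i.succ⟩, rfl⟩) hhead
    simp only [List.ofFn_succ, List.prod_cons, Fin.sum_univ_succ]
    simp only [Fin.tail_def] at htail hmul
    omega

end KempermanScherk

section Olson

open Finset
open scoped Pointwise

theorem exists_sum_val_eq_of_count_le_card {ι α : Type*} [Fintype ι] [DecidableEq α] (J : Finset ι)
    (R : Multiset α) (hR : ∀ z, R.count z ≤ #J) :
    ∃ D : ι → Finset α, (∀ i ∉ J, D i = ∅) ∧ ∑ i, (D i).val = R := by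
  classical
  choose P hPJ hPcard using fun z ↦ exists_subset_card_eq (hR z)
  refine ⟨fun i ↦ {z ∈ R.toFinset | i ∈ P z}, fun i hi ↦ ?_, ?_⟩
  · exact filter_eq_empty_iff.2 fun z _ hz ↦ hi (hPJ z hz)
  · ext z
    have hmem (i : ι) : z ∈ R.toFinset ∧ i ∈ P z ↔ i ∈ P z :=
      and_iff_right_of_imp fun hi ↦
        Multiset.mem_toFinset.2 (Multiset.count_pos.1 (hPcard z ▸ card_pos.2 ⟨i, hi⟩))
    simp only [Multiset.count_sum', Multiset.count_eq_of_nodup (Finset.nodup _), mem_val,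
      mem_filter, hmem, ← card_filter, filter_univ_mem, hPcard]

variable {G : Type*} [Group G] [Finite G] [DecidableEq G] {n : ℕ}

theorem exists_ne_prod_eq_of_card_le (w : Fin n → G) (J : Finset (Fin n)) (R : Multiset G)
    (hJ : ∀ z, R.count z ≤ #J) (hw : ∀ i ∈ J, w i ∉ R) (hR : Nat.card G ≤ R.card) :
    ∃ y ≠ w, (List.ofFn y).prod = (List.ofFn w).prod ∧ (∀ i ∉ J, y i = w i) ∧
      univ.val.map y ≤ univ.val.map w + R := by
  have := Fintype.ofFinite G
  obtain ⟨D, hDJ, rfl⟩ := exists_sum_val_eq_of_count_le_card J R hJ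
  have hwD (i : Fin n) : w i ∉ D i := by
    by_cases hi : i ∈ J
    · exact fun hmem ↦ hw i hi (Multiset.mem_sum.2 ⟨i, mem_univ i, hmem⟩)
    · simp [hDJ i hi]
  by_contra! hno
  have hlt := sum_card_lt_card_prod_ofFn_add (fun i ↦ insert (w i) (D i)) w
    (fun i ↦ mem_insert_self _ _) fun y hy hprod ↦ by
      by_contra hne
      refine hno y hne hprod (fun i hi ↦ by simpa [hDJ i hi] using hy i) ?_
      have hterm (i : Fin n) : {y i} ≤ {w i} + (D i).val := by
        simpa [Multiset.singleton_le] using hy i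
      have hsum (v : Fin n → G) : univ.val.map v = ∑ i, {v i} := by
        rw [← Multiset.sum_map_singleton (univ.val.map v), Multiset.map_map]
        rfl
      rw [hsum, hsum, ← sum_add_distrib]
      exact sum_le_sum fun i _ ↦ hterm i
  have hprod := card_le_univ (List.ofFn fun i ↦ insert (w i) (D i)).prod
  simp only [card_insert_of_notMem (hwD _), sum_add_distrib, sum_const, card_univ,
    Fintype.card_fin, smul_eq_mul, mul_one] at hlt
  simp only [Multiset.card_sum, Finset.card_val, Nat.card_eq_fintype_card] at hR
  omega

theorem exists_prod_eq_count_lt {S : Multiset G} {g : G} (hg : ∀ z, S.count z ≤ S.count g)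
    (hS : Nat.card G + n ≤ S.card + 1) (w : Fin n → G)
    (hw : ∀ z ≠ g, (univ.val.map w).count z ≤ S.count z)
    (hlt : S.count g < (univ.val.map w).count g) :
    ∃ y : Fin n → G, (List.ofFn y).prod = (List.ofFn w).prod ∧
      (∀ z ≠ g, (univ.val.map y).count z ≤ S.count z) ∧
      (univ.val.map y).count g < (univ.val.map w).count g := by
  set W := univ.val.map w with hW
  have hcount (y : Fin n → G) : (univ.val.map y).count g = #{i | y i = g} := by
    simp only [Multiset.count_map, eq_comm (a := g), card_def, filter_val]
  have hcard : Nat.card G ≤ (S - W).card := by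
    have hunion : S < S ∪ W := Multiset.le_union_left.lt_of_ne fun h ↦
      hlt.not_ge (h ▸ Multiset.count_le_of_le g Multiset.le_union_right)
    have hlt_card := Multiset.card_lt_card hunion
    have hWcard : W.card = n := by simp [W]
    rw [Multiset.union_def, Multiset.card_add] at hlt_card
    omega
  obtain ⟨y, hne, hprod, hJ, hle⟩ := exists_ne_prod_eq_of_card_le w {i | w i = g} (S - W)
    (fun z ↦ by
      rw [Multiset.count_sub, ← hcount, ← hW]
      exact (Nat.sub_le _ _).trans ((hg z).trans hlt.le))
    (fun i hi ↦ by
      rw [(mem_filter.1 hi).2, ← Multiset.count_eq_zero, Multiset.count_sub]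
      exact Nat.sub_eq_zero_of_le hlt.le) hcard
  refine ⟨y, hprod, fun z hz ↦ ?_, ?_⟩
  · have hz_le := Multiset.count_le_of_le z hle
    rw [Multiset.count_add, Multiset.count_sub, ← hW, Nat.add_sub_cancel' (hw z hz)] at hz_le
    exact hz_le
  · rw [hcount, hW, hcount]
    obtain ⟨i, hi⟩ := Function.ne_iff.1 hne
    have hwi : w i = g := by simpa using mt (hJ i) hi
    refine card_lt_card (ssubset_iff_of_subset (fun j hj ↦ ?_) |>.2
      ⟨i, by simpa using hwi, by simpa [← hwi] using hi⟩)
    by_contra hwj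
    exact hwj (by simpa [hJ j hwj] using hj)

end Olson

theorem exists_le_card_eq_isProductOne {G : Type*} [Group G] [Finite G] {n : ℕ}
    (hn : ∀ g : G, g ^ n = 1) (S : Multiset G) (hS : Nat.card G + n ≤ S.card + 1) :
    ∃ T ≤ S, T.card = n ∧ IsProductOne T := by
  classical
  obtain ⟨g, hg⟩ := Finite.exists_max S.count
  obtain ⟨w, ⟨hprod, hw⟩, hmin⟩ := exists_minimalFor_of_wellFoundedLT
    (fun w : Fin n → G ↦ (List.ofFn w).prod = 1 ∧
      ∀ z ≠ g, (Finset.univ.val.map w).count z ≤ S.count z)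
    (fun w ↦ (Finset.univ.val.map w).count g)
    ⟨fun _ ↦ g, by simp [hn], fun z hz ↦ by simp [Multiset.count_replicate, hz.symm]⟩
  refine ⟨Finset.univ.val.map w, Multiset.le_iff_count.2 fun z ↦ ?_, by simp,
    List.ofFn w, (Fin.univ_val_map w).symm, hprod⟩
  by_cases hz : z = g
  · subst hz
    by_contra! hlt
    obtain ⟨y, hyprod, hy, hylt⟩ := exists_prod_eq_count_lt hg hS w hw hlt
    exact hylt.not_ge (hmin ⟨hyprod.trans hprod, hy⟩ hylt.le)
  · exact hw z hz

section LowerBound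

variable {G : Type*} [Group G] {S T : Multiset G}

theorem IsProductOne.of_cons_one (h : IsProductOne (1 ::ₘ T)) : IsProductOne T := by
  obtain ⟨l, hl, hprod⟩ := h
  have hmem : (1 : G) ∈ l := by simp [← Multiset.mem_coe, hl]
  obtain ⟨u, v, rfl⟩ := List.append_of_mem hmem
  refine ⟨u ++ v, ?_, by simpa using hprod⟩
  simpa [← Multiset.cons_coe, ← Multiset.coe_add] using hl

theorem IsProductOne.of_add_replicate_one {m : ℕ}
    (h : IsProductOne (T + Multiset.replicate m 1)) : IsProductOne T := by
  induction m with
  | zero => simpa using h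
  | succ m ih => exact ih (.of_cons_one (by simpa using h))

theorem ProductOneFree.card_le_of_le_add_replicate_one {m : ℕ} (hS : ProductOneFree S)
    (hTS : T ≤ S + Multiset.replicate m 1) (hT : IsProductOne T) : T.card ≤ m := by
  classical
  obtain ⟨j, hj, hrep⟩ := Multiset.le_replicate_iff.1 (tsub_le_iff_left.2 hTS)
  have hsplit : T = T ∩ S + Multiset.replicate j 1 := by
    rw [← hrep, add_comm, Multiset.sub_add_inter]
  have hfree : T ∩ S = 0 := by
    by_contra hne
    exact hS _ Multiset.inter_le_right hne (.of_add_replicate_one (hsplit ▸ hT))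
  rw [hsplit, hfree]
  simpa

end LowerBound

theorem davenport_add_card_le_E_le_general {G : Type*} [Group G] [Finite G] {n : ℕ} (hn : n ≠ 0)
    (hpow : ∀ g : G, g ^ n = 1) (d E : ℕ)
    (hd : IsGreatest {k : ℕ | ∃ S : Multiset G, Multiset.card S = k ∧ ProductOneFree S} d)
    (hE : IsLeast {l : ℕ | ∀ S : Multiset G, l ≤ Multiset.card S →
      ∃ T ≤ S, Multiset.card T = n ∧ IsProductOne T} E) :
    d + n ≤ E ∧ E ≤ Nat.card G + n - 1 := by
  refine ⟨?_, hE.2 fun S hS ↦ exists_le_card_eq_isProductOne hpow S (by omega)⟩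
  by_contra! hlt
  obtain ⟨⟨S, rfl, hS⟩, -⟩ := hd
  obtain ⟨T, hTS, hTcard, hT⟩ := hE.1 (S + Multiset.replicate (n - 1) 1) (by
    rw [Multiset.card_add, Multiset.card_replicate]
    omega)
  have hT_le := hS.card_le_of_le_add_replicate_one hTS hT
  omega

/-- For every finite group `G`, `d(G) + |G| ≤ E(G) ≤ 2|G| − 1`. -/
theorem davenport_add_card_le_E_le {G : Type*} [Group G] [Fintype G] (d E : ℕ)
    (hd : IsGreatest {k : ℕ | ∃ S : Multiset G, Multiset.card S = k ∧ ProductOneFree S} d)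
    (hE : IsLeast {l : ℕ | ∀ S : Multiset G, l ≤ Multiset.card S →
      ∃ T ≤ S, Multiset.card T = Fintype.card G ∧ IsProductOne T} E) :
    d + Fintype.card G ≤ E ∧ E ≤ 2 * Fintype.card G - 1 := by
  rw [two_mul, ← Nat.card_eq_fintype_card] at *
  exact davenport_add_card_le_E_le_general Nat.card_pos.ne' (fun _ ↦ pow_card_eq_one') d E hd hE
end

section
/- Let G ≅ C_m ⋉_φ C_m. Then every sequence S over G of length |S| = 3m − 2 contains a nonempty product-one subsequence T of length |T| ∈ [1, m]. -/
/-!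
By Chevalley–Warning, `3p - 2` vectors of `(ZMod p)²` have a nonempty zero-sum subfamily of size
`p` or `2p`, and one of size `2p` splits further into two zero-sum parts, one of size at most `p`.

For the smallest prime factor `p` of `m`, the exponent `k` by which an element of the second factor
acts on the first satisfies `k ^ m ≡ 1`, hence `k ≡ 1`, modulo `p`, as `m` is coprime to `p - 1`.
So the action becomes trivial modulo `p`, and `C_m ⋉ C_m` maps onto `C_p × C_p`, with kernel
`C_q ⋉ C_q` where `m = pq`. A sequence of length `3m - 2 = (3p - 2) + (3q - 3) p` contains `3q - 2`
disjoint nonempty blocks of length at most `p` with product in the kernel, and by induction on `m`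
at most `q` of these blocks combine to a product-one subsequence.
-/

section ZeroSum

variable {ι κ K : Type*} [Fintype κ] [Field K] [Fintype K]

open MvPolynomial in
lemma exists_ne_zero_sum_mul_pow_card_sub_one_eq_zero [Fintype ι] (v : ι → κ → K)
    (h : Fintype.card κ * (Fintype.card K - 1) < Fintype.card ι) :
    ∃ x : ι → K, x ≠ 0 ∧ ∀ j, ∑ i, v i j * x i ^ (Fintype.card K - 1) = 0 := by
  classical
  obtain ⟨p, _⟩ := CharP.exists K
  have hp : p.Prime := CharP.char_is_prime K p
  let F (j : κ) : MvPolynomial ι K := ∑ i, C (v i j) * X i ^ (Fintype.card K - 1)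
  have eval_F (x : ι → K) (j : κ) :
      eval x (F j) = ∑ i, v i j * x i ^ (Fintype.card K - 1) := by
    simp [F]
  have totalDegree_F (j : κ) : (F j).totalDegree ≤ Fintype.card K - 1 :=
    totalDegree_finsetSum_le fun i _ ↦ (totalDegree_mul _ _).trans (by simp)
  have sum_totalDegree_lt : ∑ j, (F j).totalDegree < Fintype.card ι :=
    (Finset.sum_le_card_nsmul _ _ _ fun j _ ↦ totalDegree_F j).trans_lt (by simpa using h)
  have dvd_card : p ∣ Nat.card {x : ι → K // ∀ j, eval x (F j) = 0} := by
    simpa only [Nat.card_eq_fintype_card] using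
      char_dvd_card_solutions_of_fintype_sum_lt p sum_totalDegree_lt
  let zero : {x : ι → K // ∀ j, eval x (F j) = 0} :=
    ⟨0, fun j ↦ by simp [F, zero_pow (Nat.sub_pos_of_lt Fintype.one_lt_card).ne']⟩
  have : Nonempty {x : ι → K // ∀ j, eval x (F j) = 0} := ⟨zero⟩
  have : Nontrivial {x : ι → K // ∀ j, eval x (F j) = 0} :=
    Finite.one_lt_card_iff_nontrivial.mp (hp.one_lt.trans_le (Nat.le_of_dvd Nat.card_pos dvd_card))
  obtain ⟨x, hx⟩ := exists_ne zero
  exact ⟨x, fun h0 ↦ hx (Subtype.ext h0), fun j ↦ (eval_F x j).symm.trans (x.2 j)⟩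

lemma exists_nonempty_sum_eq_zero [Fintype ι] (v : ι → κ → K)
    (h : Fintype.card κ * (Fintype.card K - 1) < Fintype.card ι) :
    ∃ t : Finset ι, t.Nonempty ∧ ∑ i ∈ t, v i = 0 := by
  classical
  obtain ⟨x, hx0, hx⟩ := exists_ne_zero_sum_mul_pow_card_sub_one_eq_zero v h
  obtain ⟨i, hi⟩ := Function.ne_iff.mp hx0
  refine ⟨Finset.univ.filter (x · ≠ 0), ⟨i, by simpa using hi⟩, funext fun j ↦ ?_⟩
  rw [Finset.sum_apply, Finset.sum_filter]
  refine Eq.trans ?_ (hx j)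
  refine Finset.sum_congr rfl fun i _ ↦ ?_
  split_ifs with hxi
  · rw [FiniteField.pow_card_sub_one_eq_one _ hxi, mul_one]
  · rw [not_not.mp hxi, zero_pow (Nat.sub_pos_of_lt Fintype.one_lt_card).ne', mul_zero]

lemma exists_subset_nonempty_sum_eq_zero (v : ι → κ → K) (s : Finset ι)
    (h : Fintype.card κ * (Fintype.card K - 1) < s.card) :
    ∃ t ⊆ s, t.Nonempty ∧ ∑ i ∈ t, v i = 0 := by
  obtain ⟨t, ht, hsum⟩ := exists_nonempty_sum_eq_zero (fun i : s ↦ v i) (by simpa using h)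
  exact ⟨t.map (.subtype _), Finset.map_subtype_subset t, ht.map, by simpa using hsum⟩

variable {p : ℕ} [Fact p.Prime]

lemma exists_subset_nonempty_dvd_card_sum_eq_zero (v : ι → κ → ZMod p) (s : Finset ι)
    (h : (Fintype.card κ + 1) * (p - 1) < s.card) :
    ∃ t ⊆ s, t.Nonempty ∧ p ∣ t.card ∧ ∑ i ∈ t, v i = 0 := by
  -- The extra coordinate is constantly `1`, so that its sum over `t` is the residue of `t.card`.
  let w (i : ι) (o : Option κ) : ZMod p := o.elim 1 (v i)
  obtain ⟨t, hts, ht, hsum⟩ := exists_subset_nonempty_sum_eq_zero w s (by simpa using h)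
  have hsum' (o : Option κ) : ∑ i ∈ t, w i o = 0 := by rw [← Finset.sum_apply, hsum, Pi.zero_apply]
  refine ⟨t, hts, ht, ?_, funext fun j ↦ ?_⟩
  · simpa [w, ZMod.natCast_eq_zero_iff] using hsum' none
  · simpa [w] using hsum' (some j)

lemma exists_subset_card_le_sum_eq_zero_of_card_eq_two_mul (v : ι → Fin 2 → ZMod p)
    (s : Finset ι) (hs : s.card = 2 * p) (hsum : ∑ i ∈ s, v i = 0) :
    ∃ t ⊆ s, t.Nonempty ∧ t.card ≤ p ∧ ∑ i ∈ t, v i = 0 := by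
  classical
  have hp : 1 < p := (Fact.out : p.Prime).one_lt
  obtain ⟨s', hs's, hs'⟩ := Finset.exists_subset_card_eq (show 2 * p - 1 ≤ s.card by omega)
  obtain ⟨t, hts', ht, htsum⟩ := exists_subset_nonempty_sum_eq_zero v s'
    (by simp only [Fintype.card_fin, ZMod.card]; omega)
  have hts := hts'.trans hs's
  by_cases htp : t.card ≤ p
  · exact ⟨t, hts, ht, htp, htsum⟩
  have card_sdiff := Finset.card_sdiff_of_subset hts
  have card_le := Finset.card_le_card hts'
  refine ⟨s \ t, Finset.sdiff_subset, Finset.card_pos.mp (by omega), by omega, ?_⟩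
  rw [Finset.sum_sdiff_eq_sub hts, hsum, htsum, sub_zero]

lemma exists_subset_card_le_sum_eq_zero (v : ι → Fin 2 → ZMod p) (s : Finset ι)
    (hs : 3 * p - 2 ≤ s.card) :
    ∃ t ⊆ s, t.Nonempty ∧ t.card ≤ p ∧ ∑ i ∈ t, v i = 0 := by
  have hp : 1 < p := (Fact.out : p.Prime).one_lt
  obtain ⟨s', hs's, hs'⟩ := Finset.exists_subset_card_eq hs
  obtain ⟨t, hts', ht, ⟨c, hc⟩, hsum⟩ := exists_subset_nonempty_dvd_card_sum_eq_zero v s'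
    (by rw [hs', Fintype.card_fin]; omega)
  have hts := hts'.trans hs's
  have card_pos := ht.card_pos
  have hc3 : c < 3 := by
    refine lt_of_mul_lt_mul_left' (a := p) ?_
    have := Finset.card_le_card hts'
    omega
  interval_cases c
  · omega
  · exact ⟨t, hts, ht, by omega, hsum⟩
  · obtain ⟨r, hrt, hr⟩ :=
      exists_subset_card_le_sum_eq_zero_of_card_eq_two_mul v t (by omega) hsum
    exact ⟨r, hrt.trans hts, hr⟩

end ZeroSum

section ProductOne

/-- Every sequence over `G` of length at least `d` has a nonempty product-one subsequence of length
at most `n`; for the least such `d` the literature writes `s_{≤ n}(G)`, which is `η(G)` when `n`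
is the exponent of `G`. -/
def HasShortProductOne (G : Type*) [Group G] (d n : ℕ) : Prop :=
  ∀ S : Multiset G, d ≤ S.card → ∃ T ≤ S, T ≠ 0 ∧ T.card ≤ n ∧ IsProductOne T

variable {G H K : Type*} [Group G] [Group H] [Group K]

lemma isProductOne_iff_prod_eq_one {A : Type*} [CommGroup A] {S : Multiset A} :
    IsProductOne S ↔ S.prod = 1 := by
  refine ⟨?_, fun h ↦ ⟨S.toList, S.coe_toList, by rw [Multiset.prod_toList, h]⟩⟩
  rintro ⟨l, rfl, hl⟩
  rwa [Multiset.prod_coe]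

lemma hasShortProductOne_of_subsingleton [Subsingleton G] : HasShortProductOne G 1 1 := by
  intro S hS
  obtain ⟨g, hg⟩ := Multiset.card_pos_iff_exists_mem.mp hS
  exact ⟨{g}, Multiset.singleton_le.mpr hg, by simp, by simp, [g], rfl, Subsingleton.elim _ _⟩

lemma hasShortProductOne_multiplicative_zmod_prod (p : ℕ) [Fact p.Prime] :
    HasShortProductOne (Multiplicative (ZMod p) × Multiplicative (ZMod p)) (3 * p - 2) p := by
  intro S hS
  induction S using Quotient.inductionOn with | _ l
  let v (i : Fin l.length) : Fin 2 → ZMod p := ![l[i].1.toAdd, l[i].2.toAdd]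
  obtain ⟨t, -, ht, htp, hsum⟩ :=
    exists_subset_card_le_sum_eq_zero v Finset.univ (by simpa using hS)
  refine ⟨t.val.map l.get, ?_, by simpa using ht.ne_empty, by simpa using htp, ?_⟩
  · have := Multiset.map_le_map (f := l.get) (Finset.val_le_iff.mpr t.subset_univ)
    simpa using this
  · rw [isProductOne_iff_prod_eq_one]
    have hsum' (j : Fin 2) : ∑ i ∈ t, v i j = 0 := by rw [← Finset.sum_apply, hsum, Pi.zero_apply]
    refine Prod.ext ?_ ?_
    · simpa [Prod.fst_prod, v] using congrArg Multiplicative.ofAdd (hsum' 0)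
    · simpa [Prod.snd_prod, v] using congrArg Multiplicative.ofAdd (hsum' 1)

lemma exists_map_eq_of_coe_le_map {α β : Type*} (f : α → β) (l : List β) :
    ∀ S : Multiset α, (l : Multiset β) ≤ S.map f →
      ∃ k : List α, (k : Multiset α) ≤ S ∧ k.map f = l := by
  induction l with
  | nil => exact fun S _ ↦ ⟨[], Multiset.zero_le S, rfl⟩
  | cons b l ih =>
    intro S hS
    obtain ⟨a, ha, rfl⟩ := Multiset.mem_map.mp (Multiset.mem_of_le hS List.mem_cons_self)
    obtain ⟨S, rfl⟩ := Multiset.exists_cons_of_mem ha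
    rw [Multiset.map_cons, ← Multiset.cons_coe, Multiset.cons_le_cons_iff] at hS
    obtain ⟨k, hkS, rfl⟩ := ih S hS
    exact ⟨a :: k, Multiset.cons_le_cons a hkS, rfl⟩

/-- The length condition is `d + (k - 1) * n ≤ S.card`, stated without subtraction. -/
lemma exists_flatten_le {α : Type*} {P : List α → Prop} {d n : ℕ}
    (hP : ∀ S : Multiset α, d ≤ S.card → ∃ l : List α, ↑l ≤ S ∧ l.length ≤ n ∧ P l) (k : ℕ) :
    ∀ S : Multiset α, d + k * n ≤ S.card + n →
      ∃ L : List (List α), L.length = k ∧ ↑L.flatten ≤ S ∧ ∀ l ∈ L, l.length ≤ n ∧ P l := by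
  classical
  induction k with
  | zero => exact fun S _ ↦ ⟨[], rfl, Multiset.zero_le S, by simp⟩
  | succ k ih =>
    intro S hS
    rw [add_one_mul] at hS
    obtain ⟨l, hlS, hl⟩ := hP S (by omega)
    have card_sub := Multiset.card_sub hlS
    have card_le := Multiset.card_le_card hlS
    rw [Multiset.coe_card] at card_sub card_le
    obtain ⟨L, hLk, hLS, hL⟩ := ih (S - l) (by omega)
    refine ⟨l :: L, by simp [hLk], ?_, List.forall_mem_cons.mpr ⟨hl, hL⟩⟩
    rw [List.flatten_cons, ← Multiset.coe_add, ← add_tsub_cancel_of_le hlS]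
    gcongr

lemma HasShortProductOne.exists_list_prod_mem_ker {d n : ℕ} (hH : HasShortProductOne H d n)
    (f : G →* H) (S : Multiset G) (hS : d ≤ S.card) :
    ∃ l : List G, ↑l ≤ S ∧ l.length ≤ n ∧ l ≠ [] ∧ l.prod ∈ f.ker := by
  obtain ⟨T, hTS, hT0, hTn, l, rfl, hl⟩ := hH (S.map f) (by rwa [Multiset.card_map])
  obtain ⟨l, hlS, rfl⟩ := exists_map_eq_of_coe_le_map f l S hTS
  refine ⟨l, hlS, by simpa using hTn, by simpa using hT0, ?_⟩
  rwa [MonoidHom.mem_ker, map_list_prod]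

lemma length_flatten_le {α : Type*} {L : List (List α)} {n : ℕ} (h : ∀ l ∈ L, l.length ≤ n) :
    L.flatten.length ≤ L.length * n := by
  rw [List.length_flatten]
  simpa using List.sum_le_card_nsmul (L.map List.length) n (by simpa using h)

theorem HasShortProductOne.of_ker_le_range {d n e k : ℕ} {f : G →* H} {i : K →* G}
    (hH : HasShortProductOne H d n) (hK : HasShortProductOne K (e + 1) k)
    (hfi : f.ker ≤ i.range) : HasShortProductOne G (d + e * n) (k * n) := by
  intro S hS
  obtain ⟨L, hLe, hLS, hL⟩ :=
    exists_flatten_le (hH.exists_list_prod_mem_ker f) (e + 1) S (by rw [add_one_mul]; omega)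
  have (l : List G) (hl : l ∈ L) : ∃ x, i x = l.prod := hfi (hL l hl).2.2
  choose! r hr using this
  obtain ⟨T, hTL, hT0, hTk, w, rfl, hw⟩ := hK (Multiset.map r L) (by simp [hLe])
  obtain ⟨M, hML, rfl⟩ := exists_map_eq_of_coe_le_map r w L hTL
  rw [Multiset.coe_le] at hML
  have hM (l : List G) (hl : l ∈ M) := hML.subset hl
  refine ⟨M.flatten, ?_, ?_, ?_, M.flatten, rfl, ?_⟩
  · obtain ⟨M', hM', hM'L⟩ := hML
    exact (Multiset.coe_le.mpr (hM'.flatten.symm.subperm.trans hM'L.flatten.subperm)).trans hLS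
  · intro h0
    obtain ⟨l, hl⟩ := List.exists_mem_of_ne_nil M (by simpa using hT0)
    exact (hL l (hM l hl)).2.1 (List.flatten_eq_nil_iff.mp (by simpa using h0) l hl)
  · rw [Multiset.coe_card]
    refine (length_flatten_le fun l hl ↦ (hL l (hM l hl)).1).trans ?_
    gcongr
    simpa using hTk
  · rw [List.prod_flatten, ← List.map_congr_left fun l hl ↦ hr l (hM l hl)]
    simpa [map_list_prod, Function.comp_def] using congrArg i hw

end ProductOne

section Semidirect

lemma characteristic_of_isCyclic {N : Type*} [Group N] [IsCyclic N] (M : Subgroup N) :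
    M.Characteristic := by
  refine Subgroup.characteristic_iff_le_comap.mpr fun σ x hx ↦ ?_
  obtain ⟨k, hk⟩ := σ.toMonoidHom.map_cyclic
  rw [Subgroup.mem_comap, hk x]
  exact M.zpow_mem hx k

variable {p : ℕ} [Fact p.Prime]

lemma exists_surjective_monoidHom_multiplicative_zmod {A : Type*} [CommGroup A] [Finite A]
    (hp : p ∣ Nat.card A) :
    ∃ χ : A →* Multiplicative (ZMod p), Function.Surjective χ := by
  obtain ⟨ι, _, n, -, ⟨e⟩⟩ := CommGroup.equiv_prod_multiplicative_zmod_of_finite A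
  rw [Nat.card_congr e.toEquiv, Nat.card_pi] at hp
  obtain ⟨i, -, hi⟩ := (Fact.out : p.Prime).prime.dvd_finsetProd_iff _ |>.mp hp
  rw [Nat.card_congr Multiplicative.toAdd, Nat.card_zmod] at hi
  let π : Multiplicative (ZMod (n i)) →* Multiplicative (ZMod p) :=
    (ZMod.castHom hi (ZMod p)).toAddMonoidHom.toMultiplicative
  have hπ : Function.Surjective π := ZMod.castHom_surjective hi
  refine ⟨(π.comp (Pi.evalMonoidHom _ i)).comp e.toMonoidHom, ?_⟩
  exact (hπ.comp (Function.surjective_eval i)).comp e.surjective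

lemma card_ker_mul_card_of_surjective {G Q : Type*} [Group G] [Group Q] {f : G →* Q}
    (hf : Function.Surjective f) : Nat.card f.ker * Nat.card Q = Nat.card G := by
  rw [← f.ker.card_mul_index, Subgroup.index_ker, f.range_eq_top.mpr hf, Subgroup.card_top]

lemma zmod_eq_one_of_pow_eq_one_of_coprime {k : ZMod p} {m : ℕ} (hm : m.Coprime (p - 1))
    (hm0 : m ≠ 0) (hk : k ^ m = 1) : k = 1 := by
  have hk0 : k ≠ 0 := fun h ↦ by simp [h, hm0] at hk
  exact (pow_eq_one_iff_of_coprime hm).mp ⟨hk, ZMod.pow_card_sub_one_eq_one hk0⟩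

lemma map_mulAut_apply_eq_of_coprime {N : Type*} [Group N] [IsCyclic N]
    (χ : N →* Multiplicative (ZMod p)) {σ : MulAut N} {m : ℕ} (hm : m.Coprime (p - 1))
    (hm0 : m ≠ 0) (hσ : σ ^ m = 1) (x : N) : χ (σ x) = χ x := by
  obtain ⟨k, hk⟩ := σ.toMonoidHom.map_cyclic
  have χ_apply (y : N) : (χ (σ y)).toAdd = k * (χ y).toAdd := by
    rw [show σ y = y ^ k from hk y, map_zpow, toAdd_zpow, zsmul_eq_mul]
  have χ_pow_apply (j : ℕ) : (χ ((σ ^ j) x)).toAdd = k ^ j * (χ x).toAdd := by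
    induction j with
    | zero => simp
    | succ j ih => rw [pow_succ', MulAut.mul_apply, χ_apply, ih, pow_succ', mul_assoc]
  have fixed : (χ x).toAdd = k ^ m * (χ x).toAdd := by simpa [hσ] using χ_pow_apply m
  apply Multiplicative.toAdd.injective
  by_cases hx : (χ x).toAdd = 0
  · rw [χ_apply, hx, mul_zero]
  · have hk1 := zmod_eq_one_of_pow_eq_one_of_coprime hm hm0 ((mul_eq_right₀ hx).mp fixed.symm)
    rw [χ_apply, hk1, one_mul]

variable {N H : Type*} [Group N] [Group H] {φ : H →* MulAut N}

lemma HasShortProductOne.semidirectProduct_of_ker [Finite N] {χN : N →* Multiplicative (ZMod p)}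
    {χH : H →* Multiplicative (ZMod p)} [χN.ker.Characteristic] (hχN : Function.Surjective χN)
    (hφ : ∀ h x, χN (φ h x) = χN x)
    (hK : HasShortProductOne
      (χN.ker ⋊[(MulAut.characteristic χN.ker).comp (φ.comp χH.ker.subtype)] χH.ker)
      (3 * Nat.card χN.ker - 2) (Nat.card χN.ker)) :
    HasShortProductOne (N ⋊[φ] H) (3 * Nat.card N - 2) (Nat.card N) := by
  let f : N ⋊[φ] H →* Multiplicative (ZMod p) × Multiplicative (ZMod p) :=
    SemidirectProduct.mulEquivProd.toMonoidHom.comp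
      (SemidirectProduct.map (φ₂ := 1) χN χH fun h ↦ MonoidHom.ext fun x ↦ hφ h x)
  let i : χN.ker ⋊[(MulAut.characteristic χN.ker).comp (φ.comp χH.ker.subtype)] χH.ker →*
      N ⋊[φ] H :=
    SemidirectProduct.map χN.ker.subtype χH.ker.subtype fun _ ↦ rfl
  have hfi : f.ker ≤ i.range := fun g hg ↦
    ⟨⟨⟨g.left, congrArg Prod.fst hg⟩, ⟨g.right, congrArg Prod.snd hg⟩⟩, rfl⟩
  have card_ker_pos : 0 < Nat.card χN.ker := Nat.card_pos
  rw [show 3 * Nat.card χN.ker - 2 = 3 * (Nat.card χN.ker - 1) + 1 by omega] at hK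
  have hG := (hasShortProductOne_multiplicative_zmod_prod p).of_ker_le_range hK hfi
  have card_zmod : Nat.card (Multiplicative (ZMod p)) = p := Nat.card_zmod p
  have card_mul := card_ker_mul_card_of_surjective hχN
  rw [card_zmod] at card_mul
  have length_eq : 3 * p - 2 + 3 * (Nat.card χN.ker - 1) * p = 3 * Nat.card N - 2 := by
    have p_le : p ≤ Nat.card N := card_mul ▸ Nat.le_mul_of_pos_left p card_ker_pos
    have p_pos : 0 < p := (Fact.out : p.Prime).pos
    rw [mul_assoc, Nat.sub_one_mul, card_mul]
    omega
  rwa [length_eq, card_mul] at hG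

theorem product_one_subseq_le_m_general {N H : Type*} [Group N] [IsCyclic N] [Finite N]
    [CommGroup H] (φ : H →* MulAut N) (hNH : Nat.card H = Nat.card N) :
    HasShortProductOne (N ⋊[φ] H) (3 * Nat.card N - 2) (Nat.card N) := by
  induction hm : Nat.card N using Nat.strong_induction_on generalizing N H with | _ m ih
  have hm0 : m ≠ 0 := hm ▸ Nat.card_pos.ne'
  have : Finite H := Nat.finite_of_card_ne_zero (by rwa [hNH, hm])
  obtain rfl | hm1 := eq_or_ne m 1
  · have : Subsingleton N := (Nat.card_eq_one_iff_unique.mp hm).1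
    have : Subsingleton H := (Nat.card_eq_one_iff_unique.mp (hNH.trans hm)).1
    have : Subsingleton (N ⋊[φ] H) := SemidirectProduct.equivProd.subsingleton
    exact hasShortProductOne_of_subsingleton
  have : Fact m.minFac.Prime := ⟨Nat.minFac_prime hm1⟩
  have two_le : 2 ≤ m.minFac := (Nat.minFac_prime hm1).two_le
  have coprime : m.Coprime (m.minFac - 1) := Nat.coprime_of_lt_minFac (by omega) (by omega)
  have hφ (h : H) : φ h ^ m = 1 := by rw [← map_pow, ← hm, ← hNH, pow_card_eq_one', map_one]
  let := IsCyclic.commGroup (α := N)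
  obtain ⟨χN, hχN⟩ := exists_surjective_monoidHom_multiplicative_zmod (p := m.minFac) (A := N)
    (hm ▸ m.minFac_dvd)
  obtain ⟨χH, hχH⟩ := exists_surjective_monoidHom_multiplicative_zmod (p := m.minFac) (A := H)
    (hNH ▸ hm ▸ m.minFac_dvd)
  have card_zmod : Nat.card (Multiplicative (ZMod m.minFac)) = m.minFac := Nat.card_zmod _
  have card_ker_N := (card_ker_mul_card_of_surjective hχN).trans hm
  have card_ker_H := (card_ker_mul_card_of_surjective hχH).trans (hNH.trans hm)
  have card_ker_lt : Nat.card χN.ker < m :=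
    (lt_mul_of_one_lt_right Nat.card_pos (two_le.trans_eq card_zmod.symm)).trans_eq card_ker_N
  have := characteristic_of_isCyclic χN.ker
  rw [← hm]
  exact .semidirectProduct_of_ker hχN
    (fun h ↦ map_mulAut_apply_eq_of_coprime χN coprime hm0 (hφ h))
    (ih _ card_ker_lt _ (Nat.eq_of_mul_eq_mul_right Nat.card_pos
      (card_ker_H.trans card_ker_N.symm)) rfl)

end Semidirect

/-- Every sequence of length `3m − 2` over `C_m ⋉_φ C_m` contains a nonempty
product-one subsequence of length in `[1, m]`. -/
theorem product_one_subseq_le_m (m : ℕ) (hm : 0 < m)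
    (φ : Multiplicative (ZMod m) →* MulAut (Multiplicative (ZMod m)))
    (S : Multiset (Multiplicative (ZMod m) ⋊[φ] Multiplicative (ZMod m)))
    (hS : Multiset.card S = 3 * m - 2) :
    ∃ T ≤ S, T ≠ 0 ∧ Multiset.card T ≤ m ∧ IsProductOne T := by
  have : NeZero m := ⟨hm.ne'⟩
  have card_eq : Nat.card (Multiplicative (ZMod m)) = m := Nat.card_zmod m
  simpa only [card_eq] using product_one_subseq_le_m_general φ rfl S (by rw [card_eq, hS])
end

section
/- Let G ≅ C_m ⋉_φ C_m. Then every sequence S over G of length |S| = 4m − 3 contains a product-one subsequence T of length exactly m. -/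
/-!
Reduction modulo a prime `p ∣ m` is compatible with the action as soon as the character
`C_m → (ℤ/m)ˣ` describing it becomes trivial modulo `p`. This holds for the smallest prime factor
`p` of `m`, since then `m` is coprime to `p - 1 = |(ℤ/p)ˣ|`. So `C_m ⋊ C_m` maps to `C_p × C_p`,
with kernel again of the form `C_{m/p} ⋊ C_{m/p}`. Kemnitz's conjecture, that among `4p - 3`
elements of `C_p × C_p` there are always `p` with sum zero, extracts from the sequence `4(m/p) - 3`
disjoint blocks of length `p` with product in this kernel, and induction applies to the sequence of
block products.

Kemnitz's conjecture is proved following Reiher. The congruences between the numbers of zero-sum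
subsets of various sizes come from the polynomial method: a polynomial of degree less than `|J|` has
vanishing alternating sum over the vertices of the cube `{0, 1}^J`.
-/

/-! ### Signed counts of subsets with prescribed sum -/

section SignedCount

open Finset

variable {ι R : Type*}

theorem sum_powerset_neg_one_pow_card_mul_eq_zero [Ring R] [DecidableEq ι] {J : Finset ι} {i : ι}
    (hi : i ∈ J) {F : Finset ι → R} (hF : ∀ I, F (insert i I) = F I) :
    ∑ I ∈ J.powerset, (-1) ^ #I * F I = 0 := by
  rw [← insert_erase hi, sum_powerset_insert (notMem_erase i J), ← sum_add_distrib]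
  refine sum_eq_zero fun I hI => ?_
  have hiI : i ∉ I := fun h => notMem_erase i J (mem_powerset.1 hI h)
  rw [hF, card_insert_of_notMem hiI, pow_succ, mul_neg_one, neg_mul, add_neg_cancel]

theorem exists_mem_apply_eq_zero_of_degree_lt_card {s : ι →₀ ℕ} {J : Finset ι} (h : s.degree < #J) :
    ∃ i ∈ J, s i = 0 := by
  by_contra! hJ
  refine h.not_ge ?_
  calc #J ≤ #s.support := card_le_card fun i hi => Finsupp.mem_support_iff.2 (hJ i hi)
    _ = ∑ i ∈ s.support, 1 := card_eq_sum_ones _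
    _ ≤ s.degree := sum_le_sum fun i hi => Nat.one_le_iff_ne_zero.2 (Finsupp.mem_support_iff.1 hi)

theorem sum_powerset_neg_one_pow_card_mul_eval_indicator_eq_zero [CommRing R]
    {P : MvPolynomial ι R} {J : Finset ι} (hP : P.totalDegree < #J) :
    ∑ I ∈ J.powerset, (-1) ^ #I * MvPolynomial.eval ((I : Set ι).indicator 1) P = 0 := by
  classical
  simp only [MvPolynomial.eval_eq, mul_sum]
  rw [sum_comm]
  refine sum_eq_zero fun s hs => ?_
  obtain ⟨i, hiJ, hi⟩ : ∃ i ∈ J, s i = 0 :=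
    exists_mem_apply_eq_zero_of_degree_lt_card ((MvPolynomial.le_totalDegree hs).trans_lt hP)
  refine sum_powerset_neg_one_pow_card_mul_eq_zero hiJ fun I => ?_
  congr 1
  refine prod_congr rfl fun j hj => ?_
  have hji : j ≠ i := fun h => Finsupp.mem_support_iff.1 hj (h ▸ hi)
  simp only [Set.indicator_apply, mem_coe, mem_insert, hji, false_or]

variable {M : Type*}

section Definition

variable [DecidableEq M]

/-- The number of subsets of `J` over which the weights `w` sum to `v`, subsets of even size counted
positively and subsets of odd size negatively, as an element of the coefficient ring `R`. -/
def signedCount (R : Type*) [Ring R] [AddCommMonoid M] (w : ι → M) (J : Finset ι) (v : M) : R :=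
  ∑ I ∈ J.powerset with ∑ i ∈ I, w i = v, (-1) ^ #I

theorem signedCount_map [Ring R] [AddCommMonoid M] {κ : Type*} (e : κ ↪ ι) (w : ι → M)
    (J : Finset κ) (v : M) : signedCount R w (J.map e) v = signedCount R (w ∘ e) J v := by
  classical
  simp only [signedCount, sum_filter]
  rw [map_eq_image, powerset_image, sum_image (image_injective e.injective).injOn]
  refine sum_congr rfl fun I _ => ?_
  rw [card_image_of_injective _ e.injective, sum_image e.injective.injOn]
  rfl

theorem signedCount_insert [Ring R] [AddCommGroup M] [DecidableEq ι] (w : ι → M) {J : Finset ι}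
    {i : ι} (hi : i ∉ J) (v : M) :
    signedCount R w (insert i J) v = signedCount R w J v - signedCount R w J (v - w i) := by
  simp only [signedCount, sum_filter]
  rw [sum_powerset_insert hi, sub_eq_add_neg, ← sum_neg_distrib]
  congr 1
  refine sum_congr rfl fun I hI => ?_
  have hiI : i ∉ I := fun h => hi (mem_powerset.1 hI h)
  simp only [sum_insert hiI, card_insert_of_notMem hiI, pow_succ, mul_neg_one,
    eq_sub_iff_add_eq']
  split_ifs <;> simp

end Definition

variable {p : ℕ} [Fact p.Prime] [AddCommGroup M] [Module (ZMod p) M] [FiniteDimensional (ZMod p) M]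

open Module in
/-- The polynomial `∏ k, (1 - (∑ i ∈ J, w i k * X i - v k) ^ (p - 1))`, written in coordinates with
respect to a fixed basis of `M`. By Fermat's little theorem it detects, at the indicator vector of
`I ⊆ J`, whether the weights over `I` sum to `v`. -/
noncomputable def sumIndicator (w : ι → M) (J : Finset ι) (v : M) : MvPolynomial ι (ZMod p) :=
  ∏ k : Fin (finrank (ZMod p) M),
    (1 - (∑ i ∈ J, MvPolynomial.C ((finBasis (ZMod p) M).repr (w i) k) * MvPolynomial.X i -
      MvPolynomial.C ((finBasis (ZMod p) M).repr v k)) ^ (p - 1))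

theorem totalDegree_sumIndicator_le (w : ι → M) (J : Finset ι) (v : M) :
    (sumIndicator (p := p) w J v).totalDegree ≤ Module.finrank (ZMod p) M * (p - 1) := by
  refine (MvPolynomial.totalDegree_finsetProd _ _).trans
    ((sum_le_card_nsmul univ _ (p - 1) fun k _ => ?_).trans_eq (by simp))
  refine (MvPolynomial.totalDegree_sub _ _).trans (max_le (by simp) ?_)
  refine (MvPolynomial.totalDegree_pow _ _).trans (mul_le_of_le_one_right' ?_)
  refine (MvPolynomial.totalDegree_sub_C_le _ _).trans
    (MvPolynomial.totalDegree_finsetSum_le fun i _ => ?_)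
  refine (MvPolynomial.totalDegree_mul _ _).trans ?_
  simp

theorem eval_indicator_sumIndicator [DecidableEq M] (w : ι → M) {I J : Finset ι} (hIJ : I ⊆ J)
    (v : M) :
    MvPolynomial.eval ((I : Set ι).indicator 1) (sumIndicator (p := p) w J v) =
      if ∑ i ∈ I, w i = v then 1 else 0 := by
  classical
  set b := Module.finBasis (ZMod p) M
  have hcoord (k) : ∑ i ∈ J, b.repr (w i) k * (I : Set ι).indicator 1 i =
      b.repr (∑ i ∈ I, w i) k := by
    simp [Set.indicator_apply, sum_ite_mem, inter_eq_right.2 hIJ, Finsupp.finsetSum_apply]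
  have hzero : (∀ k, b.repr (∑ i ∈ I, w i) k = b.repr v k) ↔ ∑ i ∈ I, w i = v := by
    rw [← DFunLike.ext_iff, b.repr.injective.eq_iff]
  simp only [sumIndicator, map_prod, map_sub, map_one, map_pow, map_sum, map_mul,
    MvPolynomial.eval_C, MvPolynomial.eval_X]
  simp only [b, hcoord, ZMod.pow_card_sub_one, sub_ne_zero, ite_not, sub_ite, sub_self, sub_zero]
  rw [← if_congr hzero rfl rfl, prod_boole]
  simp only [mem_univ, forall_const, b]

theorem signedCount_eq_zero [DecidableEq M] (w : ι → M) {J : Finset ι}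
    (hJ : Module.finrank (ZMod p) M * (p - 1) < #J) (v : M) : signedCount (ZMod p) w J v = 0 := by
  rw [signedCount, sum_filter]
  refine Eq.trans ?_ (sum_powerset_neg_one_pow_card_mul_eval_indicator_eq_zero
    ((totalDegree_sumIndicator_le (p := p) w J v).trans_lt hJ))
  refine sum_congr rfl fun I hI => ?_
  rw [eval_indicator_sumIndicator w (mem_powerset.1 hI), mul_ite, mul_one, mul_zero]

theorem signedCount_eq_signedCount [DecidableEq M] (w : ι → M) {J : Finset ι}
    (hJ : Module.finrank (ZMod p) M * (p - 1) ≤ #J) (v v' : M) :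
    signedCount (ZMod p) w J v = signedCount (ZMod p) w J v' := by
  classical
  -- Adjoin one more index, of weight `v - v'`: the vanishing signed count of `v` over the enlarged
  -- family is the difference of the two signed counts over `J`.
  have hnone : none ∉ J.map .some := by simp
  have hcard : Module.finrank (ZMod p) M * (p - 1) < #(insert none (J.map .some)) := by
    rw [card_insert_of_notMem hnone, card_map]
    exact Nat.lt_succ_of_le hJ
  have h := signedCount_eq_zero (fun o : Option ι => o.elim (v - v') w) hcard v
  rw [signedCount_insert _ hnone, signedCount_map, signedCount_map, Option.elim_none,
    sub_sub_cancel] at h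
  exact sub_eq_zero.1 h

end SignedCount

/-! ### Kemnitz's conjecture -/

section ZeroSumSubsets

open Finset

variable {ι M : Type*} [DecidableEq M]

/-- The `n`-element subsets of the index set `J` over which the family `f` sums to zero. Their
number is written `(n | J)` in Reiher's proof of Kemnitz's conjecture. -/
def zeroSumSubsets [AddCommMonoid M] (f : ι → M) (n : ℕ) (J : Finset ι) : Finset (Finset ι) :=
  {I ∈ J.powersetCard n | ∑ i ∈ I, f i = 0}

section AddCommMonoid

variable [AddCommMonoid M] {f : ι → M} {n : ℕ} {I J X : Finset ι}

theorem mem_zeroSumSubsets : I ∈ zeroSumSubsets f n J ↔ (I ⊆ J ∧ #I = n) ∧ ∑ i ∈ I, f i = 0 := by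
  rw [zeroSumSubsets, mem_filter, mem_powersetCard]

variable (f J) in
theorem card_zeroSumSubsets_zero : #(zeroSumSubsets f 0 J) = 1 := by
  rw [zeroSumSubsets, powersetCard_zero, filter_singleton, if_pos sum_empty, card_singleton]

theorem zeroSumSubsets_mono (h : I ⊆ J) : zeroSumSubsets f n I ⊆ zeroSumSubsets f n J :=
  filter_subset_filter _ (powersetCard_mono h)

theorem sum_powersetCard_card_zeroSumSubsets (f : ι → M) (X : Finset ι) {n k : ℕ} (hnk : n ≤ k) :
    ∑ J ∈ X.powersetCard k, #(zeroSumSubsets f n J) =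
      (#X - n).choose (k - n) * #(zeroSumSubsets f n X) := by
  classical
  have hcount : ∀ I ∈ zeroSumSubsets f n X,
      #{J ∈ X.powersetCard k | I ⊆ J} = (#X - n).choose (k - n) := fun I hI => by
    obtain ⟨⟨hIX, rfl⟩, -⟩ := mem_zeroSumSubsets.1 hI
    exact card_filter_powersetCard_subset I X k hIX hnk
  have hsub : ∀ J ∈ X.powersetCard k,
      {I ∈ zeroSumSubsets f n X | I ⊆ J} = zeroSumSubsets f n J := fun J hJ => by
    ext I
    rw [mem_filter, mem_zeroSumSubsets, mem_zeroSumSubsets]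
    have hJX := (mem_powersetCard.1 hJ).1
    exact ⟨fun h => ⟨⟨h.2, h.1.1.2⟩, h.1.2⟩, fun h => ⟨⟨⟨h.1.1.trans hJX, h.1.2⟩, h.2⟩, h.1.1⟩⟩
  have hdouble := sum_card_bipartiteAbove_eq_sum_card_bipartiteBelow (s := zeroSumSubsets f n X)
    (t := X.powersetCard k) (· ⊆ ·)
  simp only [bipartiteAbove, bipartiteBelow] at hdouble
  rw [sum_congr rfl hcount, sum_congr rfl fun J hJ => congrArg card (hsub J hJ), sum_const,
    smul_eq_mul, mul_comm] at hdouble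
  exact hdouble.symm

end AddCommMonoid

theorem sum_card_zeroSumSubsets_sdiff [AddCommGroup M] [DecidableEq ι] (f : ι → M)
    (X : Finset ι) (r s : ℕ) :
    ∑ A ∈ zeroSumSubsets f r X, #(zeroSumSubsets f s (X \ A)) =
      ∑ D ∈ zeroSumSubsets f (r + s) X, #(zeroSumSubsets f s D) := by
  rw [← card_sigma, ← card_sigma]
  refine card_bij' (fun a _ => ⟨a.1 ∪ a.2, a.2⟩) (fun a _ => ⟨a.1 \ a.2, a.2⟩) ?_ ?_ ?_ ?_
  · rintro ⟨A, B⟩ h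
    simp only [mem_sigma, mem_zeroSumSubsets, subset_sdiff] at h ⊢
    obtain ⟨⟨⟨hAX, hA⟩, hA0⟩, ⟨⟨hBX, hBA⟩, hB⟩, hB0⟩ := h
    refine ⟨⟨⟨union_subset hAX hBX, ?_⟩, ?_⟩, ⟨subset_union_right, hB⟩, hB0⟩
    · rw [card_union_of_disjoint hBA.symm, hA, hB]
    · rw [sum_union hBA.symm, hA0, hB0, add_zero]
  · rintro ⟨D, B⟩ h
    simp only [mem_sigma, mem_zeroSumSubsets, subset_sdiff] at h ⊢
    obtain ⟨⟨⟨hDX, hD⟩, hD0⟩, ⟨hBD, hB⟩, hB0⟩ := h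
    refine ⟨⟨⟨sdiff_subset.trans hDX, ?_⟩, ?_⟩, ⟨⟨hBD.trans hDX, disjoint_sdiff⟩, hB⟩, hB0⟩
    · rw [card_sdiff_of_subset hBD, hD, hB, Nat.add_sub_cancel]
    · rw [sum_sdiff_eq_sub hBD, hD0, hB0, sub_zero]
  · rintro ⟨A, B⟩ h
    simp only [mem_sigma, mem_zeroSumSubsets, subset_sdiff] at h
    exact Sigma.ext (union_sdiff_cancel_right h.2.1.1.2.symm) HEq.rfl
  · rintro ⟨D, B⟩ h
    simp only [mem_sigma, mem_zeroSumSubsets] at h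
    exact Sigma.ext (sdiff_union_of_subset h.2.1.1) HEq.rfl

/- Padding every `f i` with a first coordinate `1` makes the size of a subset modulo `p` part of its
sum. As `p` is odd, the sign of a subset of size `p * q + r` is `(-1) ^ (q + r)`. -/
theorem signedCount_prodMk_one [AddCommMonoid M] (R : Type*) [Ring R] (f : ι → M) {p : ℕ}
    (hp : Odd p) {r Q : ℕ} (hr : r < p) {J : Finset ι} (hJ : #J < p * Q + r) :
    signedCount R (fun i => ((1 : ZMod p), f i)) J ((r : ZMod p), 0) =
      (-1) ^ r * ∑ q ∈ range Q, (-1) ^ q * (#(zeroSumSubsets f (p * q + r) J) : R) := by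
  have hsum (I : Finset ι) : ∑ i ∈ I, ((1 : ZMod p), f i) = ((r : ZMod p), 0) ↔
      #I % p = r ∧ ∑ i ∈ I, f i = 0 := by
    rw [Prod.ext_iff, Prod.fst_sum, Prod.snd_sum, sum_const, nsmul_one,
      ZMod.natCast_eq_natCast_iff', Nat.mod_eq_of_lt hr]
  have hfiber (q : ℕ) : {I ∈ {I ∈ J.powerset | ∑ i ∈ I, ((1 : ZMod p), f i) = ((r : ZMod p), 0)} |
      #I / p = q} = zeroSumSubsets f (p * q + r) J := by
    ext I
    rw [mem_filter, mem_filter, mem_powerset, hsum, mem_zeroSumSubsets]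
    have hdiv : (#I % p = r ∧ #I / p = q) ↔ #I = p * q + r := by
      rw [and_comm, Nat.div_mod_unique (by omega), and_iff_left hr, add_comm, eq_comm]
    tauto
  have hmaps : ∀ I ∈ {I ∈ J.powerset | ∑ i ∈ I, ((1 : ZMod p), f i) = ((r : ZMod p), 0)},
      #I / p ∈ range Q := fun I hI => by
    rw [mem_filter, mem_powerset, hsum] at hI
    have hlt : #I < p * Q + r := (card_le_card hI.1).trans_lt hJ
    rw [← Nat.div_add_mod #I p, hI.2.1, Nat.add_lt_add_iff_right] at hlt
    exact mem_range.2 (lt_of_mul_lt_mul_left' hlt)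
  rw [signedCount, ← sum_fiberwise_of_maps_to hmaps, mul_sum]
  refine sum_congr rfl fun q _ => ?_
  rw [hfiber, sum_congr rfl fun I hI => by rw [(mem_zeroSumSubsets.1 hI).1.2], sum_const,
    nsmul_eq_mul, Nat.cast_comm, ← mul_assoc, add_comm, pow_add, pow_mul, hp.neg_one_pow]

end ZeroSumSubsets

section Kemnitz

open Finset

variable {p : ℕ} [hp : Fact p.Prime]

theorem natCast_choose_eq_of_add_eq {n k d r : ℕ} (hk : k + p = n) (hn : n = p * d + r)
    (hr : r < p) : (n.choose k : ZMod p) = d := by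
  have hdiv : n / p = d := by
    rw [hn, Nat.mul_add_div hp.1.pos, Nat.div_eq_of_lt hr, add_zero]
  have hmod := Choose.choose_modEq_choose_mod_mul_choose_div_nat (p := p) (n := n) (k := p)
  rw [Nat.mod_self, Nat.choose_zero_right, one_mul, Nat.div_self hp.1.pos, Nat.choose_one_right,
    hdiv] at hmod
  rw [Nat.choose_symm_of_eq_add hk.symm]
  exact (ZMod.natCast_eq_natCast_iff _ _ _).2 hmod

variable {ι M : Type*} [DecidableEq M]

theorem natCast_sum_powersetCard_card_zeroSumSubsets [AddCommMonoid M] (f : ι → M) {X : Finset ι}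
    {n k d r : ℕ} (hnk : n ≤ k) (hk : k + p = #X) (hX : #X = n + p * d + r) (hr : r < p) :
    ∑ J ∈ X.powersetCard k, (#(zeroSumSubsets f n J) : ZMod p) =
      d * #(zeroSumSubsets f n X) := by
  rw [← Nat.cast_sum, sum_powersetCard_card_zeroSumSubsets f X hnk, Nat.cast_mul,
    natCast_choose_eq_of_add_eq (by omega) (d := d) (by omega) hr]

variable [AddCommGroup M] [Module (ZMod p) M]

theorem sum_neg_one_pow_mul_card_zeroSumSubsets_eq_zero (hM : Module.finrank (ZMod p) M = 2)
    (hodd : Odd p) (f : ι → M) {J : Finset ι} {r Q : ℕ} (hr : r < p) (hJ : 3 * (p - 1) < #J)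
    (hQ : #J < p * Q + r) :
    ∑ q ∈ range Q, (-1) ^ q * (#(zeroSumSubsets f (p * q + r) J) : ZMod p) = 0 := by
  have : FiniteDimensional (ZMod p) M := Module.finite_of_finrank_pos (by omega)
  have h := signedCount_eq_zero (p := p) (fun i => ((1 : ZMod p), f i))
    (by rw [Module.finrank_prod, Module.finrank_self, hM]; omega) ((r : ZMod p), 0)
  rw [signedCount_prodMk_one (ZMod p) f hodd hr hQ] at h
  exact (mul_eq_zero.1 h).resolve_left (pow_ne_zero _ (neg_ne_zero.2 one_ne_zero))

theorem one_sub_card_zeroSumSubsets_add_eq (hM : Module.finrank (ZMod p) M = 2)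
    (hodd : Odd p) (f : ι → M) {J : Finset ι} (hJ : #J = 3 * p - 3) :
    (1 : ZMod p) - #(zeroSumSubsets f p J) + #(zeroSumSubsets f (2 * p) J) =
      #(zeroSumSubsets f (p - 1) J) - #(zeroSumSubsets f (2 * p - 1) J) := by
  have hp2 := hp.1.two_le
  have : FiniteDimensional (ZMod p) M := Module.finite_of_finrank_pos (by omega)
  have h := signedCount_eq_signedCount (p := p) (fun i => ((1 : ZMod p), f i)) (J := J)
    (by rw [Module.finrank_prod, Module.finrank_self, hM]; omega)
    (((0 : ℕ) : ZMod p), 0) (((p - 1 : ℕ) : ZMod p), 0)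
  rw [signedCount_prodMk_one (Q := 3) (ZMod p) f hodd hp.1.pos (by omega),
    signedCount_prodMk_one (Q := 2) (ZMod p) f hodd (by omega) (by omega),
    (Nat.Odd.sub_odd hodd odd_one).neg_one_pow] at h
  simp only [sum_range_succ, sum_range_zero, pow_zero, one_mul, mul_zero, zero_add, add_zero,
    pow_one, mul_one, neg_one_sq, neg_one_mul, card_zeroSumSubsets_zero, Nat.cast_one, mul_comm p 2,
    ← sub_eq_add_neg] at h
  rw [h]
  congr! 4
  omega

theorem card_zeroSumSubsets_two_mul_eq_neg_one (hM : Module.finrank (ZMod p) M = 2)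
    (hodd : Odd p) {f : ι → M} {J : Finset ι} (hJ : zeroSumSubsets f p J = ∅)
    (hle : 3 * p - 2 ≤ #J) (hlt : #J < 3 * p) :
    (#(zeroSumSubsets f (2 * p) J) : ZMod p) = -1 := by
  have hp2 := hp.1.two_le
  have h := sum_neg_one_pow_mul_card_zeroSumSubsets_eq_zero hM hodd f (J := J) (Q := 3) hp.1.pos
    (by omega) (by omega)
  simp only [sum_range_succ, sum_range_zero, pow_zero, one_mul, mul_zero, zero_add, add_zero,
    pow_one, mul_one, neg_one_sq, card_zeroSumSubsets_zero, hJ, card_empty, Nat.cast_zero,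
    Nat.cast_one, mul_comm p 2] at h
  exact eq_neg_of_add_eq_zero_right h

theorem zeroSumSubsets_three_mul_eq_empty (hM : Module.finrank (ZMod p) M = 2)
    (hodd : Odd p) {f : ι → M} {X : Finset ι} (hX : zeroSumSubsets f p X = ∅) :
    zeroSumSubsets f (3 * p) X = ∅ := by
  classical
  have hp2 := hp.1.two_le
  refine eq_empty_of_forall_notMem fun D hD => ?_
  obtain ⟨⟨hDX, hDcard⟩, hDsum⟩ := mem_zeroSumSubsets.1 hD
  obtain ⟨J, hJD, hJcard⟩ := exists_subset_card_eq (show 3 * p - 1 ≤ #D by omega)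
  have hcount := card_zeroSumSubsets_two_mul_eq_neg_one hM hodd (J := J)
    (subset_empty.1 (hX ▸ zeroSumSubsets_mono (hJD.trans hDX))) (by omega) (by omega)
  obtain ⟨I, hI⟩ : (zeroSumSubsets f (2 * p) J).Nonempty := by
    refine nonempty_iff_ne_empty.2 fun hempty => ?_
    rw [hempty, card_empty, Nat.cast_zero, zero_eq_neg] at hcount
    exact one_ne_zero hcount
  obtain ⟨⟨hIJ, hIcard⟩, hIsum⟩ := mem_zeroSumSubsets.1 hI
  have hID := hIJ.trans hJD
  have hmem : D \ I ∈ zeroSumSubsets f p X := by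
    refine mem_zeroSumSubsets.2 ⟨⟨sdiff_subset.trans hDX, ?_⟩, ?_⟩
    · rw [card_sdiff_of_subset hID]
      omega
    · rw [sum_sdiff_eq_sub hID, hDsum, hIsum, sub_zero]
  exact notMem_empty _ (hX ▸ hmem)

theorem card_zeroSumSubsets_sub_one_eq (hM : Module.finrank (ZMod p) M = 2)
    (hodd : Odd p) {f : ι → M} {X : Finset ι} (hcard : #X = 4 * p - 3)
    (hX : zeroSumSubsets f p X = ∅) :
    (#(zeroSumSubsets f (p - 1) X) : ZMod p) = #(zeroSumSubsets f (3 * p - 1) X) := by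
  classical
  have hp2 := hp.1.two_le
  have hcount {J : Finset ι} (hJX : J ⊆ X) (hle : 3 * p - 2 ≤ #J) (hlt : #J < 3 * p) :
      (#(zeroSumSubsets f (2 * p) J) : ZMod p) = -1 :=
    card_zeroSumSubsets_two_mul_eq_neg_one hM hodd
      (subset_empty.1 (hX ▸ zeroSumSubsets_mono hJX)) hle hlt
  -- Count the pairs of disjoint zero-sum subsets of sizes `p - 1` and `2 * p` in two ways. Modulo
  -- `p`, a zero-sum subset of size `p - 1` occurs in `-1` of them, and one of size `3 * p - 1` is
  -- the union of `-1` of them.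
  have hleft : ∀ A ∈ zeroSumSubsets f (p - 1) X,
      (#(zeroSumSubsets f (2 * p) (X \ A)) : ZMod p) = -1 := fun A hA => by
    obtain ⟨⟨hAX, hAcard⟩, -⟩ := mem_zeroSumSubsets.1 hA
    have hdiff := card_sdiff_of_subset hAX
    exact hcount sdiff_subset (by omega) (by omega)
  have hright : ∀ D ∈ zeroSumSubsets f (p - 1 + 2 * p) X,
      (#(zeroSumSubsets f (2 * p) D) : ZMod p) = -1 := fun D hD => by
    obtain ⟨⟨hDX, hDcard⟩, -⟩ := mem_zeroSumSubsets.1 hD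
    exact hcount hDX (by omega) (by omega)
  have hswap := congrArg (Nat.cast (R := ZMod p))
    (sum_card_zeroSumSubsets_sdiff f X (p - 1) (2 * p))
  rw [Nat.cast_sum, Nat.cast_sum, sum_congr rfl hleft, sum_congr rfl hright, sum_const, sum_const,
    smul_neg, smul_neg, nsmul_one, nsmul_one, neg_inj] at hswap
  rwa [show 3 * p - 1 = p - 1 + 2 * p by omega]

theorem three_sub_two_mul_card_zeroSumSubsets_add_eq (hM : Module.finrank (ZMod p) M = 2)
    (hodd : Odd p) (f : ι → M) {X : Finset ι} (hcard : #X = 4 * p - 3) :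
    (3 : ZMod p) - 2 * #(zeroSumSubsets f p X) + #(zeroSumSubsets f (2 * p) X) =
      2 * #(zeroSumSubsets f (p - 1) X) - #(zeroSumSubsets f (2 * p - 1) X) := by
  have hp3 : 3 ≤ p := by grind [hp.1.two_le]
  have havg {n d r : ℕ} (hn : n ≤ 3 * p - 3) (hX : 4 * p - 3 = n + p * d + r) (hr : r < p) :=
    natCast_sum_powersetCard_card_zeroSumSubsets (p := p) f (X := X) hn (by omega)
      (hcard.trans hX) hr
  -- Average the relation for `3 * p - 3` elements over all subsets `J` of `X` of that size.
  have h := sum_congr rfl fun J hJ => one_sub_card_zeroSumSubsets_add_eq hM hodd f (J := J)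
    (mem_powersetCard.1 hJ : J ⊆ X ∧ _).2
  have h0 := havg (n := 0) (d := 3) (r := p - 3) (by omega) (by omega) (by omega)
  simp only [card_zeroSumSubsets_zero, Nat.cast_one] at h0
  rw [sum_add_distrib, sum_sub_distrib, sum_sub_distrib, h0,
    havg (d := 2) (r := p - 3) (by omega) (by omega) (by omega),
    havg (d := 1) (r := p - 3) (by omega) (by omega) (by omega),
    havg (d := 2) (r := p - 2) (by omega) (by omega) (by omega),
    havg (d := 1) (r := p - 2) (by omega) (by omega) (by omega)] at h
  simpa only [mul_one, Nat.cast_one, one_mul, Nat.cast_ofNat] using h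

theorem zeroSumSubsets_nonempty_of_odd (hM : Module.finrank (ZMod p) M = 2)
    (hodd : Odd p) (f : ι → M) {X : Finset ι} (hcard : #X = 4 * p - 3) :
    (zeroSumSubsets f p X).Nonempty := by
  have hp3 : 3 ≤ p := by grind [hp.1.two_le]
  by_contra! hX
  have hzero := sum_neg_one_pow_mul_card_zeroSumSubsets_eq_zero hM hodd f (J := X) (Q := 4)
    hp.1.pos (by omega) (by omega)
  have hpred := sum_neg_one_pow_mul_card_zeroSumSubsets_eq_zero hM hodd f (J := X) (r := p - 1)
    (Q := 3) (by omega) (by omega) (by omega)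
  have havg := three_sub_two_mul_card_zeroSumSubsets_add_eq hM hodd f hcard
  have hswap := card_zeroSumSubsets_sub_one_eq hM hodd hcard hX
  simp only [sum_range_succ, sum_range_zero, mul_zero, zero_add, add_zero, mul_comm p, zero_mul,
    one_mul, card_zeroSumSubsets_zero, hX, zeroSumSubsets_three_mul_eq_empty hM hodd hX, card_empty,
    Nat.cast_zero, Nat.cast_one, pow_zero, pow_one, neg_one_sq] at hzero hpred havg
  rw [show p + (p - 1) = 2 * p - 1 by omega, show 2 * p + (p - 1) = 3 * p - 1 by omega] at hpred
  have htwo : (2 : ZMod p) = 0 := by linear_combination havg - hzero + hpred + hswap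
  exact absurd (Nat.le_of_dvd two_pos ((ZMod.natCast_eq_zero_iff 2 p).1 htwo)) (by omega)

theorem zeroSumSubsets_two_nonempty [Module (ZMod 2) M] (hM : Module.finrank (ZMod 2) M = 2)
    (f : ι → M) {X : Finset ι} (hcard : #X = 5) : (zeroSumSubsets f 2 X).Nonempty := by
  classical
  have : Module.Finite (ZMod 2) M := Module.finite_of_finrank_pos (by omega)
  have : Finite M := Module.finite_of_finite (ZMod 2)
  have := Fintype.ofFinite M
  have hMcard : Fintype.card M = 4 := by
    rw [Module.card_eq_pow_finrank (K := ZMod 2), hM, ZMod.card]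
    rfl
  obtain ⟨i, hi, j, hj, hij, hf⟩ := exists_ne_map_eq_of_card_lt_of_maps_to (s := X) (t := univ)
    (f := f) (by rw [card_univ]; omega) fun _ _ => mem_univ _
  refine ⟨{i, j}, mem_zeroSumSubsets.2 ⟨⟨?_, card_pair hij⟩, ?_⟩⟩
  · exact insert_subset hi (singleton_subset_iff.2 hj)
  · rw [sum_pair hij, hf, ZModModule.add_self]

theorem zeroSumSubsets_nonempty (hM : Module.finrank (ZMod p) M = 2) (f : ι → M) {X : Finset ι}
    (hcard : #X = 4 * p - 3) : (zeroSumSubsets f p X).Nonempty := by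
  obtain rfl | hodd := hp.1.eq_two_or_odd'
  · exact zeroSumSubsets_two_nonempty hM f hcard
  · exact zeroSumSubsets_nonempty_of_odd hM hodd f hcard

end Kemnitz

/-! ### Product-one subsequences in group extensions -/

/-- `ℓ` is an upper bound for the Erdős–Ginzburg–Ziv type constant of `G` for length `m`: every
sequence of at least `ℓ` terms has a product-one subsequence of exactly `m` terms. -/
def IsEGZBound (G : Type*) [Group G] (m ℓ : ℕ) : Prop :=
  ∀ S : Multiset G, ℓ ≤ Multiset.card S → ∃ T ≤ S, Multiset.card T = m ∧ IsProductOne T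

theorem exists_coe_le_map_eq {α β : Type*} {f : α → β} {S : Multiset α} {l : List β}
    (h : (l : Multiset β) ≤ S.map f) : ∃ L : List α, (L : Multiset α) ≤ S ∧ L.map f = l := by
  induction S using Quotient.inductionOn with | _ s
  obtain ⟨l', hperm, hsub⟩ := Multiset.coe_le.1 h
  obtain ⟨s', hs', rfl⟩ := List.sublist_map_iff.1 hsub
  obtain ⟨L, rfl, hL⟩ := (congrFun₂ (List.eq_map_comp_perm f) l s').mpr hperm.symm
  exact ⟨L, Multiset.coe_le.2 ⟨s', hL.symm, hs'⟩, rfl⟩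

namespace IsEGZBound

variable {G H K : Type*} [Group G] [Group H] [Group K] {p k ℓ ℓ' : ℕ}

theorem exists_list {α : Type*} (h : IsEGZBound H p ℓ) (f : α → H) {S : Multiset α}
    (hS : ℓ ≤ Multiset.card S) :
    ∃ l : List α, (l : Multiset α) ≤ S ∧ l.length = p ∧ (l.map f).prod = 1 := by
  obtain ⟨_, hT, rfl, l, rfl, hl⟩ := h (S.map f) (by rwa [Multiset.card_map])
  obtain ⟨L, hLS, rfl⟩ := exists_coe_le_map_eq hT
  exact ⟨L, hLS, by simp, hl⟩

theorem exists_blocks (h : IsEGZBound H p ℓ) (f : G →* H) (t : ℕ) {S : Multiset G}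
    (hS : p * t + ℓ ≤ Multiset.card S + p) :
    ∃ B : List (List G), B.length = t ∧ (B.flatten : Multiset G) ≤ S ∧
      ∀ b ∈ B, b.length = p ∧ b.prod ∈ f.ker := by
  induction t generalizing S with
  | zero => exact ⟨[], rfl, Multiset.zero_le S, by simp⟩
  | succ t ih =>
    rw [Nat.mul_succ] at hS
    obtain ⟨b, hbS, hbp, hb⟩ := h.exists_list f (S := S) (by omega)
    obtain ⟨U, rfl⟩ := Multiset.le_iff_exists_add.1 hbS
    rw [Multiset.card_add, Multiset.coe_card, hbp] at hS
    obtain ⟨B, rfl, hBU, hB⟩ := ih (S := U) (by omega)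
    refine ⟨b :: B, rfl, ?_, List.forall_mem_cons.2 ⟨⟨hbp, ?_⟩, hB⟩⟩
    · rw [List.flatten_cons, ← Multiset.coe_add]
      exact add_le_add_right hBU _
    · rw [MonoidHom.mem_ker, map_list_prod, hb]

theorem extension (hH : IsEGZBound H p ℓ) (hK : IsEGZBound K k (ℓ' + 1)) (f : G →* H)
    (j : K →* G) (hexact : f.ker ≤ j.range) : IsEGZBound G (p * k) (p * ℓ' + ℓ) := by
  intro S hS
  obtain ⟨B, hBcard, hBS, hB⟩ := hH.exists_blocks f (ℓ' + 1) (S := S) (by rw [mul_add]; omega)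
  have hlift : ∀ b ∈ B, ∃ x, j x = b.prod := fun b hb => hexact (hB b hb).2
  choose! κ hκ using hlift
  obtain ⟨C, hCB, hCcard, hC⟩ := hK.exists_list κ (S := (B : Multiset (List G))) (by simp [hBcard])
  have hmem : ∀ b ∈ C, b ∈ B := fun b hb => Multiset.mem_of_le hCB hb
  refine ⟨(C.flatten : Multiset G), ?_, ?_, C.flatten, rfl, ?_⟩
  · obtain ⟨C', hperm, hsub⟩ := Multiset.coe_le.1 hCB
    exact le_trans (Multiset.coe_le.2 ⟨_, hperm.flatten, hsub.flatten⟩) hBS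
  · rw [Multiset.coe_card, List.length_flatten,
      List.map_congr_left fun b hb => (hB b (hmem b hb)).1, List.map_const', List.sum_replicate,
      hCcard, smul_eq_mul, mul_comm]
  · calc C.flatten.prod = (C.map List.prod).prod := List.prod_flatten
      _ = ((C.map κ).map j).prod := by
        rw [List.map_map]
        exact congrArg List.prod (List.map_congr_left fun b hb => (hκ b (hmem b hb)).symm)
      _ = 1 := by rw [← map_list_prod, hC, map_one]

theorem of_subsingleton [Subsingleton G] (m : ℕ) : IsEGZBound G m m := by
  intro S hS
  refine ⟨S.toList.take m, ?_, ?_, S.toList.take m, rfl, Subsingleton.elim _ _⟩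
  · exact (Multiset.coe_le.2 (List.take_sublist m S.toList).subperm).trans_eq S.coe_toList
  · rw [Multiset.coe_card, List.length_take, Multiset.length_toList, min_eq_left hS]

end IsEGZBound

theorem isEGZBound_multiplicative_of_finrank_eq_two {p : ℕ} [Fact p.Prime] {M : Type*}
    [AddCommGroup M] [Module (ZMod p) M] (hM : Module.finrank (ZMod p) M = 2) :
    IsEGZBound (Multiplicative M) p (4 * p - 3) := by
  classical
  intro S hS
  obtain ⟨X, hXS, hX⟩ := Finset.exists_subset_card_eq (hS.trans_eq S.card_toEnumFinset.symm)
  obtain ⟨I, hI⟩ := zeroSumSubsets_nonempty hM (fun x => x.1.toAdd) hX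
  obtain ⟨⟨hIX, hIcard⟩, hIsum⟩ := mem_zeroSumSubsets.1 hI
  refine ⟨I.1.map Prod.fst, Multiset.map_fst_le_of_subset_toEnumFinset (hIX.trans hXS),
    by rw [Multiset.card_map]; exact hIcard, I.toList.map Prod.fst, ?_, ?_⟩
  · rw [← Multiset.map_coe, Finset.coe_toList]
  · rw [Finset.prod_map_toList]
    exact Multiplicative.toAdd.injective ((toAdd_prod _ _).trans hIsum)

/-! ### Semidirect products of cyclic groups -/

section Semidirect

open Multiplicative

theorem monoidHom_eq_one_of_coprime_card {G H : Type*} [Group G] [Group H]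
    (h : (Nat.card G).Coprime (Nat.card H)) (f : G →* H) : f = 1 := by
  ext g
  have hG : f g ^ Nat.card G = 1 := by rw [← map_pow, pow_card_eq_one', map_one]
  exact (pow_eq_one_iff_of_coprime h).1 ⟨hG, pow_card_eq_one'⟩

theorem unitsMap_comp_eq_one_of_coprime {p m : ℕ} [Fact p.Prime] (hpm : p ∣ m)
    (hm : m.Coprime (p - 1)) (χ : Multiplicative (ZMod m) →* (ZMod m)ˣ) :
    (ZMod.unitsMap hpm).comp χ = 1 := by
  refine monoidHom_eq_one_of_coprime_card ?_ _
  rwa [Nat.card_eq_fintype_card (α := (ZMod p)ˣ), ZMod.card_units, Nat.card_congr toAdd,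
    Nat.card_zmod]

/-- Multiplication by `p` as a map `ℤ/k → ℤ/(pk)`, identifying `ℤ/k` with the kernel of the
reduction `ℤ/(pk) → ℤ/p`. -/
def zmodMulLeft (p k : ℕ) : ZMod k →+ ZMod (p * k) :=
  ZMod.lift k ⟨(AddMonoidHom.mulLeft (p : ZMod (p * k))).comp (Int.castAddHom _), by
    simp [← Nat.cast_mul]⟩

theorem zmodMulLeft_intCast (p k : ℕ) (x : ℤ) : zmodMulLeft p k x = p * x :=
  ZMod.lift_coe _ _ _

theorem zmodMulLeft_castHom_mul (p k : ℕ) (u : ZMod (p * k)) (x : ZMod k) :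
    zmodMulLeft p k (ZMod.castHom (Dvd.intro_left p rfl) (ZMod k) u * x) =
      u * zmodMulLeft p k x := by
  obtain ⟨u, rfl⟩ := ZMod.intCast_surjective u
  obtain ⟨x, rfl⟩ := ZMod.intCast_surjective x
  rw [map_intCast, ← Int.cast_mul, zmodMulLeft_intCast, zmodMulLeft_intCast, Int.cast_mul,
    mul_left_comm]

theorem exists_zmodMulLeft_eq_of_castHom_eq_zero {p k : ℕ} {x : ZMod (p * k)}
    (hx : ZMod.castHom (Dvd.intro k rfl) (ZMod p) x = 0) : ∃ y, zmodMulLeft p k y = x := by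
  obtain ⟨x, rfl⟩ := ZMod.intCast_surjective x
  rw [map_intCast, ZMod.intCast_zmod_eq_zero_iff_dvd] at hx
  obtain ⟨y, rfl⟩ := hx
  exact ⟨y, by rw [zmodMulLeft_intCast, Int.cast_mul, Int.cast_natCast]⟩

/-- The identification of `(ℤ/m)ˣ` with `Aut C_m`, a unit acting by multiplication. -/
def unitsMulAut (m : ℕ) : (ZMod m)ˣ ≃* MulAut (Multiplicative (ZMod m)) :=
  ((MulAutMultiplicative (ZMod m)).trans
    (AddEquiv.toMultiplicativeLeft (ZMod.AddAutEquivUnits m))).symm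

/-- The group `C_m ⋊ C_m` whose second factor acts on the first through the character `χ`.
Every semidirect product `C_m ⋊ C_m` has this form, and characters can be reduced modulo divisors of
`m`. -/
abbrev CyclicSemidirect {m : ℕ} (χ : Multiplicative (ZMod m) →* (ZMod m)ˣ) : Type :=
  Multiplicative (ZMod m) ⋊[(unitsMulAut m).toMonoidHom.comp χ] Multiplicative (ZMod m)

namespace CyclicSemidirect

theorem toAdd_mul_left {m : ℕ} {χ : Multiplicative (ZMod m) →* (ZMod m)ˣ}
    (g h : CyclicSemidirect χ) :
    toAdd (g * h).left = toAdd g.left + χ g.right * toAdd h.left := rfl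

/-- The reduction of both coordinates modulo `p`, a homomorphism to `C_p × C_p` when `χ` is trivial
modulo `p`. -/
def toZModProd {p m : ℕ} (hpm : p ∣ m) (χ : Multiplicative (ZMod m) →* (ZMod m)ˣ)
    (hχ : (ZMod.unitsMap hpm).comp χ = 1) :
    CyclicSemidirect χ →* Multiplicative (ZMod p × ZMod p) :=
  MonoidHom.mk' (fun g => ofAdd (ZMod.castHom hpm (ZMod p) (toAdd g.left),
    ZMod.castHom hpm (ZMod p) (toAdd g.right))) fun g h => by
      have hu : ZMod.castHom hpm (ZMod p) (χ g.right) = 1 :=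
        congrArg Units.val (DFunLike.congr_fun hχ g.right)
      rw [← ofAdd_add, Prod.mk_add_mk]
      congr 2
      · rw [toAdd_mul_left, map_add, map_mul, hu, one_mul]
      · exact map_add _ _ _

/-- The character `y ↦ χ (p * y) mod k` of `C_k` through which the subgroup `p C_{pk}` acts on
`p C_{pk}`, both copies of `p C_{pk}` being identified with `C_k`. -/
def restrictCharacter {p k : ℕ} (χ : Multiplicative (ZMod (p * k)) →* (ZMod (p * k))ˣ) :
    Multiplicative (ZMod k) →* (ZMod k)ˣ :=
  ((ZMod.unitsMap (Dvd.intro_left p rfl)).comp χ).comp (zmodMulLeft p k).toMultiplicative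

/-- Multiplication of both coordinates by `p`, a homomorphism `C_k ⋊ C_k → C_{pk} ⋊ C_{pk}` onto the
kernel of the reduction modulo `p`. -/
def inclusion {p k : ℕ} (χ : Multiplicative (ZMod (p * k)) →* (ZMod (p * k))ˣ) :
    CyclicSemidirect (restrictCharacter χ) →* CyclicSemidirect χ :=
  SemidirectProduct.map (zmodMulLeft p k).toMultiplicative (zmodMulLeft p k).toMultiplicative
    fun _ => MonoidHom.ext fun _ => congrArg ofAdd (zmodMulLeft_castHom_mul p k _ _)

theorem ker_toZModProd_le_range_inclusion {p k : ℕ}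
    (χ : Multiplicative (ZMod (p * k)) →* (ZMod (p * k))ˣ)
    (hχ : (ZMod.unitsMap (Dvd.intro k rfl : p ∣ p * k)).comp χ = 1) :
    (toZModProd (Dvd.intro k rfl) χ hχ).ker ≤ (inclusion χ).range := by
  intro g hg
  obtain ⟨hleft, hright⟩ := Prod.ext_iff.1 (ofAdd.injective (MonoidHom.mem_ker.1 hg))
  obtain ⟨x, hx⟩ := exists_zmodMulLeft_eq_of_castHom_eq_zero hleft
  obtain ⟨y, hy⟩ := exists_zmodMulLeft_eq_of_castHom_eq_zero hright
  exact ⟨⟨ofAdd x, ofAdd y⟩, SemidirectProduct.ext (congrArg ofAdd hx) (congrArg ofAdd hy)⟩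

end CyclicSemidirect

theorem isEGZBound_cyclicSemidirect_prime_mul {p k : ℕ} [Fact p.Prime] (hk : 0 < k)
    (hcop : (p * k).Coprime (p - 1)) (χ : Multiplicative (ZMod (p * k)) →* (ZMod (p * k))ˣ)
    (h : IsEGZBound (CyclicSemidirect (CyclicSemidirect.restrictCharacter χ)) k (4 * k - 3)) :
    IsEGZBound (CyclicSemidirect χ) (p * k) (4 * (p * k) - 3) := by
  have hχ := unitsMap_comp_eq_one_of_coprime (Dvd.intro k rfl) hcop χ
  have hfinrank : Module.finrank (ZMod p) (ZMod p × ZMod p) = 2 := by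
    rw [Module.finrank_prod, Module.finrank_self]
  have hlength : p * (4 * k - 4) + (4 * p - 3) = 4 * (p * k) - 3 := by
    have hp : 0 < p := (Fact.out : p.Prime).pos
    have hle : p ≤ p * k := Nat.le_mul_of_pos_right p hk
    rw [Nat.mul_sub, mul_left_comm, mul_comm p 4]
    omega
  rw [← hlength]
  refine (isEGZBound_multiplicative_of_finrank_eq_two hfinrank).extension ?_ _ _
    (CyclicSemidirect.ker_toZModProd_le_range_inclusion χ hχ)
  rwa [show 4 * k - 4 + 1 = 4 * k - 3 by omega]

theorem isEGZBound_cyclicSemidirect {m : ℕ} (hm : 0 < m)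
    (χ : Multiplicative (ZMod m) →* (ZMod m)ˣ) :
    IsEGZBound (CyclicSemidirect χ) m (4 * m - 3) := by
  induction m using Nat.strong_induction_on with | _ m ih
  obtain rfl | hm1 := eq_or_ne m 1
  · have : Subsingleton (CyclicSemidirect χ) := SemidirectProduct.equivProd.subsingleton
    exact IsEGZBound.of_subsingleton 1
  have hprime := Nat.minFac_prime hm1
  have hcop : m.Coprime (m.minFac - 1) :=
    Nat.coprime_of_lt_minFac (Nat.sub_ne_zero_of_lt hprime.one_lt) (Nat.sub_one_lt hprime.ne_zero)
  obtain ⟨k, hk⟩ := m.minFac_dvd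
  generalize m.minFac = p at hprime hcop hk
  subst hk
  have : Fact p.Prime := ⟨hprime⟩
  have hkpos : 0 < k := Nat.pos_of_mul_pos_left hm
  exact isEGZBound_cyclicSemidirect_prime_mul hkpos hcop χ
    (ih k (lt_mul_of_one_lt_left hkpos hprime.one_lt) hkpos _)

end Semidirect

/-- Every sequence of length `4m − 3` over `C_m ⋉_φ C_m` contains a product-one
subsequence of length exactly `m`. -/
theorem product_one_subseq_eq_m (m : ℕ) (hm : 0 < m)
    (φ : Multiplicative (ZMod m) →* MulAut (Multiplicative (ZMod m)))
    (S : Multiset (Multiplicative (ZMod m) ⋊[φ] Multiplicative (ZMod m)))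
    (hS : Multiset.card S = 4 * m - 3) :
    ∃ T ≤ S, Multiset.card T = m ∧ IsProductOne T := by
  obtain ⟨χ, rfl⟩ : ∃ χ, (unitsMulAut m).toMonoidHom.comp χ = φ :=
    ⟨(unitsMulAut m).symm.toMonoidHom.comp φ, by ext; simp⟩
  exact isEGZBound_cyclicSemidirect hm χ S hS.ge
end
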